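/- arXiv:2112.13575 — 3 statements merged into one kernel-verified Lean document; each statement's English description precedes it below -/
import Mathlib

section
/- Let d ≥ 2, let ℓ : [0,∞)^d → [0,∞) be a stable tail dependence function with extreme value copula C and Pickands dependence function A, and let X = (X₁,…,X_d) be a random vector with continuous marginal distribution functions F₁,…,F_d such that P(X₁ ≤ x₁,…,X_d ≤ x_d) = C(F₁(x₁),…,F_d(x_d)). Then for every w in the unit simplex with all w_j > 0, the w-madogram satisfies ν(w) = A(w)/(1+A(w)) − c(w), where c(w) = (1/d)Σ_{j=1}^d w_j/(1+w_j); equivalently A(w) = (ν(w)+c(w))/(1−ν(w)−c(w)). -/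
open MeasureTheory ProbabilityTheory

/-!
Write `S = ⨆ j, F_j(X_j) ^ (1 / w_j)`. For `0 < t < 1`, the event `S ≤ t` says that
`F_j(X_j) ≤ t ^ w_j` for all `j`. By continuity of `F_j`, the sublevel set of `F_j` at the level
`t ^ w_j` is a half-line `(-∞, q_j]` with `F_j(q_j) = t ^ w_j` (`exists_quantile`), so the event
is exactly `X ≤ q` and its probability is `C(t ^ w_1, …, t ^ w_d) = t ^ ℓ(w)`, by homogeneity of
`ℓ`. In the same way `P(F_j(X_j) ^ (1 / w_j) ≤ t) = t ^ w_j`. A `[0,1]`-valued variable with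
distribution function `t ^ a` has mean `a / (1 + a)` (`integral_of_cdf_rpow`, by the layer-cake
formula). Linearity of the integral then gives the formula for `ν`, and solving it for `ℓ w`
gives the second identity.
-/

/-- A `[0,1]`-valued variable with distribution function `t ^ a` on `(0,1)` has mean
`a / (1 + a)`. -/
lemma integral_of_cdf_rpow {Ω : Type*} [MeasurableSpace Ω] (μ : Measure Ω)
    [IsProbabilityMeasure μ] (f : Ω → ℝ) (hf : Measurable f) (h0 : ∀ ω, 0 ≤ f ω)
    (h1 : ∀ ω, f ω ≤ 1) (a : ℝ) (ha : 0 < a)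
    (h : ∀ t : ℝ, 0 < t → t < 1 → μ.real {ω | f ω ≤ t} = t ^ a) :
    Integrable f μ ∧ ∫ ω, f ω ∂μ = a / (1 + a) := by
  have hint : Integrable f μ := by
    refine Integrable.of_bound hf.aestronglyMeasurable 1 (.of_forall fun ω => ?_)
    rw [Real.norm_eq_abs, abs_of_nonneg (h0 ω)]
    exact h1 ω
  refine ⟨hint, ?_⟩
  rw [hint.integral_eq_integral_meas_lt (.of_forall h0)]
  have hsub : ∫ t in Set.Ioi (0:ℝ), μ.real {ω | t < f ω}
      = ∫ t in Set.Ioo (0:ℝ) 1, μ.real {ω | t < f ω} := by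
    apply setIntegral_eq_of_subset_of_forall_sdiff_eq_zero measurableSet_Ioi
    · exact fun t ht => ht.1
    · rintro t ⟨ht0, ht1⟩
      have : (1:ℝ) ≤ t := by
        by_contra hlt
        exact ht1 ⟨ht0, not_le.mp hlt⟩
      have he : {ω | t < f ω} = ∅ := by
        ext ω
        simpa using (h1 ω).trans this
      simp [he]
  have hcongr : ∫ t in Set.Ioo (0:ℝ) 1, μ.real {ω | t < f ω}
      = ∫ t in Set.Ioo (0:ℝ) 1, (1 - t ^ a) := by
    apply setIntegral_congr_fun measurableSet_Ioo
    intro t ht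
    have he : {ω | t < f ω} = {ω | f ω ≤ t}ᶜ := by
      ext ω
      simp
    simp only [he]
    rw [probReal_compl_eq_one_sub (measurableSet_le hf measurable_const), h t ht.1 ht.2]
  rw [hsub, hcongr, ← integral_Ioc_eq_integral_Ioo, ← intervalIntegral.integral_of_le zero_le_one,
    intervalIntegral.integral_sub (by simp)
      (intervalIntegral.intervalIntegrable_rpow' (by linarith)),
    integral_rpow (Or.inl (by linarith))]
  rw [Real.one_rpow, Real.zero_rpow (by linarith)]
  simp
  field_simp
  ring

/-- The sublevel set at height `u ∈ (0,1)` of a continuous distribution function is a closed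
half-line, at whose endpoint (the largest `u`-quantile) the value `u` is attained. -/
lemma exists_quantile (G : ℝ → ℝ) (hmono : Monotone G) (hcont : Continuous G)
    (hbot : Filter.Tendsto G Filter.atBot (nhds 0)) (htop : Filter.Tendsto G Filter.atTop (nhds 1))
    (u : ℝ) (hu0 : 0 < u) (hu1 : u < 1) :
    ∃ q, G q = u ∧ ∀ y, G y ≤ u ↔ y ≤ q := by
  obtain ⟨p, hp⟩ := (hbot.eventually_lt_const hu0).exists
  obtain ⟨r, hr⟩ := (htop.eventually_const_lt hu1).exists
  obtain ⟨z, hz⟩ : ∃ z, G z = u := by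
    have := mem_range_of_exists_le_of_exists_ge hcont ⟨p, hp.le⟩ ⟨r, hr.le⟩
    exact this
  have hne : {y | G y ≤ u}.Nonempty := ⟨p, hp.le⟩
  have hbdd : BddAbove {y | G y ≤ u} := by
    refine ⟨r, fun y hy => ?_⟩
    by_contra hlt
    exact absurd (hmono (not_le.mp hlt).le) (not_le.mpr (lt_of_le_of_lt hy hr))
  have hclosed : IsClosed {y | G y ≤ u} := isClosed_le hcont continuous_const
  have hmem : G (sSup {y | G y ≤ u}) ≤ u := hclosed.csSup_mem hne hbdd
  refine ⟨sSup {y | G y ≤ u}, le_antisymm hmem ?_, fun y => ⟨fun hy => le_csSup hbdd hy,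
    fun hy => (hmono hy).trans hmem⟩⟩
  exact hz.ge.trans (hmono (le_csSup hbdd hz.le))

/-- For a random vector `X` whose distribution is an extreme value
copula `C` (with stable tail dependence function `ℓ` and Pickands dependence
function `A = ℓ` on the simplex) composed with continuous margins, and `w` in the
unit simplex with all `w j > 0`, the w-madogram satisfies
`ν(w) = A(w)/(1+A(w)) − c(w)`, equivalently `A(w) = (ν(w)+c(w))/(1−ν(w)−c(w))`. -/
theorem stmt3 (d : ℕ) (hd : 2 ≤ d) (ℓ : (Fin d → ℝ) → ℝ)
    (hℓnonneg : ∀ x : Fin d → ℝ, (∀ j, 0 ≤ x j) → 0 ≤ ℓ x)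
    (hℓcont : ContinuousOn ℓ {x | ∀ j, 0 ≤ x j})
    (hℓconv : ConvexOn ℝ {x | ∀ j, 0 ≤ x j} ℓ)
    (hℓhom : ∀ c : ℝ, 0 < c → ∀ x : Fin d → ℝ, (∀ j, 0 ≤ x j) →
      ℓ (fun j => c * x j) = c * ℓ x)
    (hℓbounds : ∀ x : Fin d → ℝ, (∀ j, 0 ≤ x j) →
      (∀ j, x j ≤ ℓ x) ∧ ℓ x ≤ ∑ j, x j)
    (C : (Fin d → ℝ) → ℝ)
    (hC : ∀ u : Fin d → ℝ, (∀ j, 0 < u j ∧ u j ≤ 1) →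
      C u = Real.exp (-ℓ (fun j => -Real.log (u j))))
    {Ω : Type*} [MeasureSpace Ω] [IsProbabilityMeasure (ℙ : Measure Ω)]
    (X : Ω → Fin d → ℝ) (hX : Measurable X)
    (F : Fin d → ℝ → ℝ)
    (hF : ∀ j t, F j t = ((ℙ : Measure Ω) {ω | X ω j ≤ t}).toReal)
    (hFcont : ∀ j, Continuous (F j))
    (hjoint : ∀ x : Fin d → ℝ, (∀ j, 0 < F j (x j)) →
      ((ℙ : Measure Ω) {ω | ∀ j, X ω j ≤ x j}).toReal = C (fun j => F j (x j)))
    (w : Fin d → ℝ) (hw0 : ∀ j, 0 < w j) (hw1 : ∑ j, w j = 1)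
    (ν c : ℝ)
    (hν : ν = ∫ ω, ((⨆ j, (F j (X ω j)) ^ (1 / w j))
      - (1/(d:ℝ)) * ∑ j, (F j (X ω j)) ^ (1 / w j)) ∂(ℙ : Measure Ω))
    (hc : c = (1/(d:ℝ)) * ∑ j, w j / (1 + w j)) :
    ν = ℓ w / (1 + ℓ w) - c ∧ ℓ w = (ν + c) / (1 - ν - c) := by
  have hdpos : 0 < d := by omega
  have : Nonempty (Fin d) := ⟨⟨0, hdpos⟩⟩
  have hXj : ∀ j, Measurable fun ω => X ω j := fun j => (measurable_pi_apply j).comp hX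
  -- Each `F j` is the distribution function of the law of `X j`.
  have hFcdf : ∀ j, F j = cdf ((ℙ : Measure Ω).map fun ω => X ω j) := by
    intro j
    have := Measure.isProbabilityMeasure_map (μ := (ℙ : Measure Ω)) (hXj j).aemeasurable
    ext t
    rw [hF, cdf_eq_real, map_measureReal_apply (hXj j) measurableSet_Iic]
    rfl
  have hFmono : ∀ j, Monotone (F j) := fun j => hFcdf j ▸ monotone_cdf _
  have hF0 : ∀ j t, 0 ≤ F j t := fun j t => by rw [hF]; exact ENNReal.toReal_nonneg
  have hF1 : ∀ j t, F j t ≤ 1 := fun j t => by rw [hFcdf]; exact cdf_le_one _ _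
  have hquant : ∀ t : ℝ, 0 < t → t < 1 → ∀ j,
      ∃ q, F j q = t ^ w j ∧ ∀ y, F j y ≤ t ^ w j ↔ y ≤ q := fun t ht0 ht1 j =>
    exists_quantile (F j) (hFmono j) (hFcont j) (hFcdf j ▸ tendsto_cdf_atBot _)
      (hFcdf j ▸ tendsto_cdf_atTop _) _ (Real.rpow_pos_of_pos ht0 _)
      (Real.rpow_lt_one ht0.le ht1 (hw0 j))
  have hpow : ∀ t : ℝ, 0 < t → ∀ j y, F j y ^ (1 / w j) ≤ t ↔ F j y ≤ t ^ w j := by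
    intro t ht0 j y
    rw [one_div, Real.rpow_inv_le_iff_of_pos (hF0 j y) ht0.le (hw0 j)]
  have hY0 : ∀ j y, 0 ≤ F j y ^ (1 / w j) := fun j y => Real.rpow_nonneg (hF0 j y) _
  have hY1 : ∀ j y, F j y ^ (1 / w j) ≤ 1 := fun j y =>
    Real.rpow_le_one (hF0 j y) (hF1 j y) (one_div_pos.mpr (hw0 j)).le
  have hYm : ∀ j, Measurable fun ω => F j (X ω j) ^ (1 / w j) := fun j =>
    ((hFcont j).measurable.comp (hXj j)).pow_const _
  have hℓpos : 0 < ℓ w :=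
    (hw0 ⟨0, hdpos⟩).trans_le ((hℓbounds w fun j => (hw0 j).le).1 _)
  have hmarg : ∀ j, Integrable (fun ω => F j (X ω j) ^ (1 / w j)) (ℙ : Measure Ω) ∧
      ∫ ω, F j (X ω j) ^ (1 / w j) ∂(ℙ : Measure Ω) = w j / (1 + w j) := by
    intro j
    refine integral_of_cdf_rpow _ _ (hYm j) (fun ω => hY0 j _) (fun ω => hY1 j _) _ (hw0 j) ?_
    intro t ht0 ht1
    obtain ⟨q, hq, hqi⟩ := hquant t ht0 ht1 j
    simp only [hpow t ht0, hqi]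
    rw [← hq, hF]
    rfl
  have hsup : Integrable (fun ω => ⨆ j, F j (X ω j) ^ (1 / w j)) (ℙ : Measure Ω) ∧
      ∫ ω, (⨆ j, F j (X ω j) ^ (1 / w j)) ∂(ℙ : Measure Ω) = ℓ w / (1 + ℓ w) := by
    refine integral_of_cdf_rpow _ _ (Measurable.iSup hYm)
      (fun ω => Real.iSup_nonneg fun j => hY0 j _) (fun ω => ciSup_le fun j => hY1 j _) _ hℓpos ?_
    intro t ht0 ht1
    choose q hq hqi using hquant t ht0 ht1
    have hset : {ω | (⨆ j, F j (X ω j) ^ (1 / w j)) ≤ t} = {ω | ∀ j, X ω j ≤ q j} := by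
      ext ω
      simp only [Set.mem_ofPred_eq]
      rw [ciSup_le_iff (Set.finite_range _).bddAbove]
      simp only [hpow t ht0, hqi]
    have hu0 : ∀ j, 0 < t ^ w j := fun j => Real.rpow_pos_of_pos ht0 _
    have hlog : 0 < -Real.log t := neg_pos.mpr (Real.log_neg ht0 ht1)
    rw [hset, measureReal_def, hjoint q fun j => by rw [hq]; exact hu0 j]
    simp only [hq]
    rw [hC _ fun j => ⟨hu0 j, Real.rpow_le_one ht0.le ht1.le (hw0 j).le⟩]
    have harg : (fun j => -Real.log (t ^ w j)) = fun j => (-Real.log t) * w j := by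
      ext j
      rw [Real.log_rpow ht0]
      ring
    rw [harg, hℓhom _ hlog w fun j => (hw0 j).le, Real.rpow_def_of_pos ht0]
    congr 1
    ring
  have hmain : ν = ℓ w / (1 + ℓ w) - c := by
    rw [hν, integral_sub hsup.1 ((integrable_finsetSum _ fun j _ => (hmarg j).1).const_mul _),
      integral_const_mul, integral_finsetSum _ fun j _ => (hmarg j).1, hsup.2, hc]
    simp only [(hmarg _).2]
  refine ⟨hmain, ?_⟩
  have h1 : 1 - ν - c = 1 / (1 + ℓ w) := by
    rw [hmain]
    field_simp
    ring
  rw [h1, hmain]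
  field_simp
  ring
end

section
/- Let d ≥ 2, let C(u) = Π_{j=1}^d u_j be the independence copula, and fix w in the unit simplex with all w_j > 0. With the variance components defined as double integrals against C, one has: σ_{d+1}²(p,w) = (1/4)(1/(3p) − Σ_{j=1}^d p_j^{−1} w_j/(4−w_j)); σ_{jk}(w) = 0 for all j < k; and σ_{jk}^{(2)}(w) = 0 for all j ≠ k. -/
/-!
For the independence copula, `C` with only coordinates `j ≠ k` different from `1` equals the product
of these two coordinates, so the integrands of `σ_{jk}`, `σ_{jk}^{(2)}` and `τ_{jk}` vanish.
Moreover `Ċ_j(u^{w₁}, …, u^{w_d}) = u^{1 - w_j}`, because the weights sum to one. Hence `γ_j²` and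
`γ_{1j}` have the same integrand `(u ∧ v)^a u^{1-a} v^{1-a} - u v` with `a = w_j`, and `γ₁²` is the
case `a = 1`. Its integral is `a / (4 (4 - a))` (`integral_kernel`), so in `σ_{d+1}²` the `γ_j²` and
`γ_{1j}` terms combine to minus one copy of `∑_j p_j⁻¹ w_j / (4 (4 - w_j))`, and the `γ₁²` term is
`1 / (12 p)`.
-/

theorem prod_two_coords {d : ℕ} {j k : Fin d} (hjk : j ≠ k) (a b : ℝ) :
    ∏ i, (if i = j then a else if i = k then b else 1) = a * b := by
  have h : ∀ i : Fin d, (if i = j then a else if i = k then b else 1)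
      = (if i = j then a else 1) * (if i = k then b else 1) := by
    intro i
    by_cases h1 : i = j
    · simp [h1, hjk]
    · simp [h1]
  simp only [h, Finset.prod_mul_distrib]
  simp

theorem prod_erase_rpow {d : ℕ} {w : Fin d → ℝ} (hw0 : ∀ j, 0 < w j) (hw1 : ∑ j, w j = 1)
    (j : Fin d) {u : ℝ} (hu : 0 ≤ u) :
    ∏ k ∈ Finset.univ.erase j, u ^ w k = u ^ (1 - w j) := by
  rw [← Real.rpow_sum_of_nonneg hu (fun i _ => (hw0 i).le)]
  congr 1
  rw [← hw1, ← Finset.add_sum_erase _ w (Finset.mem_univ j)]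
  ring

theorem rpow_mul_rpow_one_sub {a u : ℝ} (ha0 : 0 < a) (ha1 : a ≤ 1) (hu : 0 ≤ u) :
    u ^ a * u ^ (1 - a) = u := by
  rw [← Real.rpow_add_of_nonneg hu ha0.le (by linarith)]
  simp

/-- The inner integral, computed by splitting `[0, 1]` at `u`. -/
theorem integral_kernel_inner {a u : ℝ} (ha0 : 0 < a) (ha1 : a ≤ 1) (hu : u ∈ Set.Icc (0:ℝ) 1) :
    ∫ v in (0:ℝ)..1, ((min u v) ^ a * u ^ (1 - a) * v ^ (1 - a) - u * v)
      = u ^ (3 - a) * (1 / 2 - 1 / (2 - a)) + u * (1 / (2 - a) - 1 / 2) := by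
  obtain ⟨hu0, hu1⟩ := hu
  have hc : Continuous
      (fun v : ℝ => (min u v) ^ a * u ^ (1 - a) * v ^ (1 - a) - u * v) := by
    have h1 : Continuous (fun v : ℝ => (min u v) ^ a) :=
      (continuous_const.min continuous_id).rpow_const (fun _ => Or.inr ha0.le)
    have h2 : Continuous (fun v : ℝ => v ^ (1 - a)) :=
      continuous_id.rpow_const (fun _ => Or.inr (by linarith))
    fun_prop
  rw [← intervalIntegral.integral_add_adjacent_intervals
    (hc.intervalIntegrable 0 u) (hc.intervalIntegrable u 1)]
  have e1 : ∫ v in (0:ℝ)..u, ((min u v) ^ a * u ^ (1 - a) * v ^ (1 - a) - u * v)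
      = ∫ v in (0:ℝ)..u, (u ^ (1 - a) - u) * v := by
    apply intervalIntegral.integral_congr
    intro v hv
    rw [Set.uIcc_of_le hu0] at hv
    simp only [min_eq_right hv.2]
    linear_combination u ^ (1 - a) * rpow_mul_rpow_one_sub ha0 ha1 hv.1
  have e2 : ∫ v in u..(1:ℝ), ((min u v) ^ a * u ^ (1 - a) * v ^ (1 - a) - u * v)
      = ∫ v in u..(1:ℝ), u * (v ^ (1 - a) - v) := by
    apply intervalIntegral.integral_congr
    intro v hv
    rw [Set.uIcc_of_le hu1] at hv
    simp only [min_eq_left hv.1]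
    linear_combination v ^ (1 - a) * rpow_mul_rpow_one_sub ha0 ha1 hu0
  rw [e1, e2, intervalIntegral.integral_const_mul, intervalIntegral.integral_const_mul,
    intervalIntegral.integral_sub (intervalIntegral.intervalIntegrable_rpow' (by linarith))
      (continuous_id'.intervalIntegrable _ _),
    integral_rpow (Or.inl (by linarith)), integral_id, integral_id]
  have p1 : u ^ (3 - a) = u ^ (1 - a) * u ^ 2 := by
    rw [show (3 - a) = (1 - a) + (2:ℕ) by push_cast; ring,
      Real.rpow_add_of_nonneg hu0 (by linarith) (by norm_num), Real.rpow_natCast]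
  have p2 : u ^ (1 - a + 1) = u ^ (1 - a) * u := by
    rw [Real.rpow_add_of_nonneg hu0 (by linarith) (by norm_num), Real.rpow_one]
  rw [p1, p2, Real.one_rpow, show 1 - a + 1 = 2 - a by ring]
  have : 2 - a ≠ 0 := by linarith
  field_simp
  ring

/-- The common value of `γ_j²` and `γ_{1j}` (with `a = w_j`) and of `γ₁²` (with `a = 1`). -/
theorem integral_kernel {a : ℝ} (ha0 : 0 < a) (ha1 : a ≤ 1) :
    ∫ u in (0:ℝ)..1, ∫ v in (0:ℝ)..1,
      ((min u v) ^ a * u ^ (1 - a) * v ^ (1 - a) - u * v) = 1 / 4 * (a / (4 - a)) := by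
  have e : ∫ u in (0:ℝ)..1, ∫ v in (0:ℝ)..1,
      ((min u v) ^ a * u ^ (1 - a) * v ^ (1 - a) - u * v)
      = ∫ u in (0:ℝ)..1,
        (u ^ (3 - a) * (1 / 2 - 1 / (2 - a)) + u * (1 / (2 - a) - 1 / 2)) := by
    apply intervalIntegral.integral_congr
    intro u hu
    rw [Set.uIcc_of_le zero_le_one] at hu
    exact integral_kernel_inner ha0 ha1 hu
  rw [e, intervalIntegral.integral_add
      ((intervalIntegral.intervalIntegrable_rpow' (by linarith)).mul_const _)
      ((continuous_id'.mul_const _).intervalIntegrable _ _),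
    intervalIntegral.integral_mul_const, intervalIntegral.integral_mul_const,
    integral_rpow (Or.inl (by linarith)), integral_id, Real.one_rpow,
    Real.zero_rpow (by linarith), show 3 - a + 1 = 4 - a by ring]
  have h2 : 2 - a ≠ 0 := by linarith
  have h4 : 4 - a ≠ 0 := by linarith
  field_simp
  ring

/-- Two functions agreeing on the nonnegative quadrant have the same iterated integral over the
unit square. -/
theorem integral_square_congr {f g : ℝ → ℝ → ℝ}
    (h : ∀ u, 0 ≤ u → ∀ v, 0 ≤ v → f u v = g u v) :
    ∫ u in (0:ℝ)..1, ∫ v in (0:ℝ)..1, f u v = ∫ u in (0:ℝ)..1, ∫ v in (0:ℝ)..1, g u v := by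
  apply intervalIntegral.integral_congr
  intro u hu
  rw [Set.uIcc_of_le zero_le_one] at hu
  apply intervalIntegral.integral_congr
  intro v hv
  rw [Set.uIcc_of_le zero_le_one] at hv
  exact h u hu.1 v hv.1


/-- For the independence copula `C(u) = Π_j u_j` (with
`Ċ_j(u) = Π_{k≠j} u_k` and `A(w) = 1`) and `w` in the unit simplex with all
`w_j > 0`, the variance components satisfy
`σ_{d+1}²(p,w) = (1/4)(1/(3p) − Σ_j p_j⁻¹ w_j/(4−w_j))`, `σ_{jk}(w) = 0` for
`j < k`, and `σ_{jk}^{(2)}(w) = 0` for `j ≠ k`. -/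
theorem stmt10 (d : ℕ) (hd : 2 ≤ d)
    (C : (Fin d → ℝ) → ℝ) (hC : ∀ u : Fin d → ℝ, C u = ∏ j, u j)
    (Cdot : Fin d → (Fin d → ℝ) → ℝ)
    (hCdot : ∀ (j : Fin d) (u : Fin d → ℝ), Cdot j u = ∏ k ∈ Finset.univ.erase j, u k)
    (w : Fin d → ℝ) (hw0 : ∀ j, 0 < w j) (hw1 : ∑ j, w j = 1)
    (p : ℝ) (hp : 0 < p) (hp1 : p ≤ 1)
    (pj : Fin d → ℝ) (hpj : ∀ j, 0 < pj j) (hpj1 : ∀ j, pj j ≤ 1)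
    (pjk : Fin d → Fin d → ℝ) (hpjk : ∀ j k, 0 < pjk j k)
    (σjk : Fin d → Fin d → ℝ)
    (hσjk : ∀ j k, σjk j k = ∫ u in (0:ℝ)..1, ∫ v in (0:ℝ)..1,
      (C (fun i => if i = j then u ^ w j else if i = k then v ^ w k else 1)
        - u ^ w j * v ^ w k))
    (σ2 : Fin d → Fin d → ℝ)
    (hσ2 : ∀ j k, j ≠ k → σ2 j k = ∫ u in (0:ℝ)..1, ∫ v in (0:ℝ)..1,
      (C (fun i => if i = j then u ^ w j else if i = k then v ^ w k else 1)
        - u ^ w j * v ^ w k) * Cdot k (fun i => v ^ w i))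
    (γ1sq : ℝ)
    (hγ1sq : γ1sq = ∫ u in (0:ℝ)..1, ∫ v in (0:ℝ)..1,
      ((min u v) ^ (1:ℝ) - u ^ (1:ℝ) * v ^ (1:ℝ)))
    (γsq : Fin d → ℝ)
    (hγsq : ∀ j, γsq j = ∫ u in (0:ℝ)..1, ∫ v in (0:ℝ)..1,
      ((min u v) ^ w j - u ^ w j * v ^ w j)
        * Cdot j (fun i => u ^ w i) * Cdot j (fun i => v ^ w i))
    (γ1 : Fin d → ℝ)
    (hγ1 : ∀ j, γ1 j = ∫ u in (0:ℝ)..1, ∫ v in (0:ℝ)..1,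
      (C (Function.update (fun i => u ^ w i) j ((min u v) ^ w j))
        - u ^ (1:ℝ) * v ^ w j) * Cdot j (fun i => v ^ w i))
    (τ : Fin d → Fin d → ℝ)
    (hτ : ∀ j k, τ j k = ∫ u in (0:ℝ)..1, ∫ v in (0:ℝ)..1,
      (C (fun i => if i = j then u ^ w j else if i = k then v ^ w k else 1)
        - u ^ w j * v ^ w k)
        * Cdot j (fun i => u ^ w i) * Cdot k (fun i => v ^ w i))
    (σd1 : ℝ)
    (hσd1 : σd1 = p⁻¹ * γ1sq + ∑ j, (pj j)⁻¹ * γsq j - 2 * ∑ j, (pj j)⁻¹ * γ1 j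
      + 2 * ∑ j, ∑ k, (if j < k then (pjk j k / (pj j * pj k)) * τ j k else 0)) :
    σd1 = (1/4) * (1/(3*p) - ∑ j, (pj j)⁻¹ * (w j / (4 - w j))) ∧
    (∀ j k : Fin d, j < k → σjk j k = 0) ∧
    (∀ j k : Fin d, j ≠ k → σ2 j k = 0) := by
  have hw_le : ∀ j, w j ≤ 1 := fun j =>
    hw1 ▸ Finset.single_le_sum (fun i _ => (hw0 i).le) (Finset.mem_univ j)
  have hτ0 : ∀ j k, j ≠ k → τ j k = 0 := by
    intro j k hjk
    rw [hτ]
    simp [hC, prod_two_coords hjk]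
  have hγ1sq' : γ1sq = 1 / 12 := by
    have h := integral_kernel (a := 1) one_pos le_rfl
    rw [hγ1sq]
    norm_num at h ⊢
    exact h
  have hγsq' : ∀ j, γsq j = 1 / 4 * (w j / (4 - w j)) := by
    intro j
    rw [hγsq, ← integral_kernel (hw0 j) (hw_le j)]
    apply integral_square_congr
    intro u hu v hv
    simp only [hCdot, prod_erase_rpow hw0 hw1 j hu, prod_erase_rpow hw0 hw1 j hv]
    have e1 := rpow_mul_rpow_one_sub (hw0 j) (hw_le j) hu
    have e2 := rpow_mul_rpow_one_sub (hw0 j) (hw_le j) hv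
    linear_combination (-(v ^ w j * v ^ (1 - w j))) * e1 - u * e2
  have hγ1' : ∀ j, γ1 j = 1 / 4 * (w j / (4 - w j)) := by
    intro j
    rw [hγ1, ← integral_kernel (hw0 j) (hw_le j)]
    apply integral_square_congr
    intro u hu v hv
    simp only [hC, hCdot, Finset.prod_update_of_mem (Finset.mem_univ j),
      Finset.sdiff_singleton_eq_erase, prod_erase_rpow hw0 hw1 j hu,
      prod_erase_rpow hw0 hw1 j hv, Real.rpow_one]
    linear_combination (-u) * rpow_mul_rpow_one_sub (hw0 j) (hw_le j) hv
  refine ⟨?_, ?_, ?_⟩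
  · have hsum : ∑ j, ∑ k, (if j < k then (pjk j k / (pj j * pj k)) * τ j k else 0) = 0 := by
      refine Finset.sum_eq_zero fun j _ => Finset.sum_eq_zero fun k _ => ?_
      split_ifs with h
      · rw [hτ0 j k h.ne, mul_zero]
      · rfl
    have hS : ∑ j, (pj j)⁻¹ * (1 / 4 * (w j / (4 - w j)))
        = 1 / 4 * ∑ j, (pj j)⁻¹ * (w j / (4 - w j)) := by
      rw [Finset.mul_sum]
      exact Finset.sum_congr rfl fun j _ => by ring
    rw [hσd1, hsum, hγ1sq']
    simp only [hγsq', hγ1', hS]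
    field_simp
    ring
  · intro j k hjk
    rw [hσjk]
    simp [hC, prod_two_coords hjk.ne]
  · intro j k hjk
    rw [hσ2 j k hjk]
    simp [hC, prod_two_coords hjk]
end

section
/- Let ℓ₂ : [0,∞)² → [0,∞) be continuous, homogeneous of order one (ℓ₂(c·x, c·y) = c·ℓ₂(x,y) for c > 0) and satisfy max(x,y) ≤ ℓ₂(x,y) ≤ x + y, and let p, q > 0. Then ∫₀¹∫₀¹ exp(−ℓ₂(−ln x, −ln y)) x^{p−1} y^{q−1} dx dy = ∫₀¹ [ℓ₂(1−s, s) + (1−s)(p−1) + s(q−1) + 1]^{−2} ds. -/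
/-!
Substitute `x = exp (-(r (1 - s)))`, `y = exp (-(r s))` with `(s, r) ∈ (0,1) × (0,∞)`. This is a
diffeomorphism onto the open unit square with Jacobian `r x y` in absolute value, and by
homogeneity the integrand becomes `r exp (-(A s) r)`, where
`A s = ℓ₂(1-s, s) + (1-s)(p-1) + s(q-1) + 1 ≥ (1-s) p + s q > 0`. Since `∫₀^∞ r exp (-a r) dr = a⁻²`,
integrating in `r` first gives the result. Both uses of Fubini are justified by integrability
of the original integrand on the square: as `ℓ₂ ≥ 0`, it is dominated by `x^(p-1) y^(q-1)`.
-/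

open MeasureTheory Set

/-- The change of variables `(s, r) ↦ (exp (-(r (1 - s))), exp (-(r s)))`. -/
noncomputable def tailCoord (z : ℝ × ℝ) : ℝ × ℝ :=
  (Real.exp (-(z.2 * (1 - z.1))), Real.exp (-(z.2 * z.1)))

/-- The derivative of `tailCoord`, see `hasFDerivAt_tailCoord`. -/
noncomputable def tailCoordDeriv (z : ℝ × ℝ) : ℝ × ℝ →L[ℝ] ℝ × ℝ :=
  (Matrix.toLin (.finTwoProd ℝ) (.finTwoProd ℝ)
    !![Real.exp (-(z.2 * (1 - z.1))) * z.2, -(Real.exp (-(z.2 * (1 - z.1))) * (1 - z.1));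
      -(Real.exp (-(z.2 * z.1)) * z.2), -(Real.exp (-(z.2 * z.1)) * z.1)]).toContinuousLinearMap

lemma hasFDerivAt_tailCoord (z : ℝ × ℝ) : HasFDerivAt tailCoord (tailCoordDeriv z) z := by
  unfold tailCoordDeriv
  rw [Matrix.toLin_finTwoProd_toContinuousLinearMap]
  have h1 : HasFDerivAt (fun z : ℝ × ℝ => z.1) (ContinuousLinearMap.fst ℝ ℝ ℝ) z := hasFDerivAt_fst
  have h2 : HasFDerivAt (fun z : ℝ × ℝ => z.2) (ContinuousLinearMap.snd ℝ ℝ ℝ) z := hasFDerivAt_snd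
  have h := ((h2.mul (h1.const_sub 1)).neg.exp).prodMk ((h2.mul h1).neg.exp)
  refine h.congr_fderiv ?_
  ext <;> simp

lemma det_tailCoordDeriv (z : ℝ × ℝ) :
    (tailCoordDeriv z).det =
      -(z.2 * (Real.exp (-(z.2 * (1 - z.1))) * Real.exp (-(z.2 * z.1)))) := by
  unfold tailCoordDeriv
  simp only [LinearMap.det_toContinuousLinearMap, LinearMap.det_toLin, Matrix.det_fin_two_of]
  ring

lemma injOn_tailCoord : InjOn tailCoord (Ioo 0 1 ×ˢ Ioi 0) := by
  rintro ⟨s, r⟩ ⟨-, hr⟩ ⟨s', r'⟩ - h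
  simp only [mem_Ioi] at hr
  simp only [tailCoord, Prod.mk.injEq, Real.exp_eq_exp] at h
  obtain ⟨h1, h2⟩ := h
  have hrr : r = r' := by linarith
  subst hrr
  have : s = s' := mul_left_cancel₀ hr.ne' (by linarith)
  rw [this]

lemma image_tailCoord : tailCoord '' (Ioo 0 1 ×ˢ Ioi 0) = Ioo 0 1 ×ˢ Ioo 0 1 := by
  ext ⟨x, y⟩
  constructor
  · rintro ⟨⟨s, r⟩, ⟨⟨hs0, hs1⟩, hr⟩, h⟩
    simp only [mem_Ioi] at hr hs0 hs1
    simp only [tailCoord, Prod.mk.injEq] at h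
    have h1 : 0 < r * (1 - s) := mul_pos hr (by linarith)
    have h2 : 0 < r * s := mul_pos hr hs0
    rw [← h.1, ← h.2]
    exact ⟨⟨Real.exp_pos _, Real.exp_lt_one_iff.2 (by linarith)⟩,
      ⟨Real.exp_pos _, Real.exp_lt_one_iff.2 (by linarith)⟩⟩
  · rintro ⟨⟨hx0, hx1⟩, ⟨hy0, hy1⟩⟩
    simp only at hx0 hx1 hy0 hy1
    have hx := Real.log_neg hx0 hx1
    have hy := Real.log_neg hy0 hy1
    have hr : 0 < -Real.log x - Real.log y := by linarith
    refine ⟨(-Real.log y / (-Real.log x - Real.log y), -Real.log x - Real.log y),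
      ⟨⟨div_pos (by linarith) hr, (div_lt_one hr).2 (by linarith)⟩, hr⟩, ?_⟩
    simp only [tailCoord, mul_sub, mul_div_cancel₀ _ hr.ne', mul_one, Prod.mk.injEq]
    refine ⟨?_, ?_⟩
    · rw [show -(-Real.log x - Real.log y - -Real.log y) = Real.log x by ring, Real.exp_log hx0]
    · rw [neg_neg, Real.exp_log hy0]

lemma integral_mul_exp_neg_mul_Ioi {a : ℝ} (ha : 0 < a) :
    ∫ r in Ioi (0:ℝ), r * Real.exp (-(a * r)) = (a ^ 2)⁻¹ := by
  have h := Real.integral_rpow_mul_exp_neg_mul_Ioi (a := 2) two_pos ha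
  norm_num at h
  exact h

/-- The integrand is integrable on the unit square: it is dominated by `x^(p-1) y^(q-1)`. -/
lemma integrableOn_integrand (ℓ2 : ℝ → ℝ → ℝ)
    (hcont : ContinuousOn (fun q : ℝ × ℝ => ℓ2 q.1 q.2) {q | 0 ≤ q.1 ∧ 0 ≤ q.2})
    (hnn : ∀ x y : ℝ, 0 ≤ x → 0 ≤ y → 0 ≤ ℓ2 x y)
    (p q : ℝ) (hp : 0 < p) (hq : 0 < q) :
    IntegrableOn (fun z : ℝ × ℝ => Real.exp (-ℓ2 (-Real.log z.1) (-Real.log z.2))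
      * z.1 ^ (p - 1) * z.2 ^ (q - 1)) (Ioo 0 1 ×ˢ Ioo 0 1) (volume.prod volume) := by
  have key : ∀ t : ℝ, 0 < t → IntegrableOn (fun x : ℝ => x ^ (t - 1)) (Ioo 0 1) := fun t ht =>
    (intervalIntegral.integrableOn_Ioo_rpow_iff one_pos).2 (by linarith)
  have hdom : IntegrableOn (fun z : ℝ × ℝ => z.1 ^ (p - 1) * z.2 ^ (q - 1))
      (Ioo 0 1 ×ˢ Ioo 0 1) (volume.prod volume) := by
    have := Integrable.mul_prod (key p hp) (key q hq)
    rwa [Measure.prod_restrict] at this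
  have hmeas : MeasurableSet (Ioo (0:ℝ) 1 ×ˢ Ioo (0:ℝ) 1) := measurableSet_Ioo.prod measurableSet_Ioo
  refine Integrable.mono' hdom ?_ ?_
  · refine ContinuousOn.aestronglyMeasurable ?_ hmeas
    have hl1 : ContinuousOn (fun z : ℝ × ℝ => -Real.log z.1) (Ioo (0:ℝ) 1 ×ˢ Ioo (0:ℝ) 1) :=
      (continuousOn_fst.log fun z hz => hz.1.1.ne').neg
    have hl2 : ContinuousOn (fun z : ℝ × ℝ => -Real.log z.2) (Ioo (0:ℝ) 1 ×ˢ Ioo (0:ℝ) 1) :=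
      (continuousOn_snd.log fun z hz => hz.2.1.ne').neg
    have hl : ContinuousOn (fun z : ℝ × ℝ => ℓ2 (-Real.log z.1) (-Real.log z.2))
        (Ioo (0:ℝ) 1 ×ˢ Ioo (0:ℝ) 1) :=
      hcont.comp (hl1.prodMk hl2) fun z hz =>
        ⟨neg_nonneg.2 (Real.log_neg hz.1.1 hz.1.2).le, neg_nonneg.2 (Real.log_neg hz.2.1 hz.2.2).le⟩
    exact (hl.neg.rexp.mul (continuousOn_fst.rpow_const fun z hz => Or.inl hz.1.1.ne')).mul
      (continuousOn_snd.rpow_const fun z hz => Or.inl hz.2.1.ne')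
  · refine (ae_restrict_iff' hmeas).2 (Filter.Eventually.of_forall fun z hz => ?_)
    have hx : 0 ≤ z.1 ^ (p - 1) := Real.rpow_nonneg hz.1.1.le _
    have hy : 0 ≤ z.2 ^ (q - 1) := Real.rpow_nonneg hz.2.1.le _
    have he : Real.exp (-ℓ2 (-Real.log z.1) (-Real.log z.2)) ≤ 1 :=
      Real.exp_le_one_iff.2 (neg_nonpos.2 (hnn _ _
        (neg_nonneg.2 (Real.log_neg hz.1.1 hz.1.2).le)
        (neg_nonneg.2 (Real.log_neg hz.2.1 hz.2.2).le)))
    rw [Real.norm_of_nonneg (by positivity), mul_assoc]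
    exact mul_le_of_le_one_left (mul_nonneg hx hy) he

/-- For a bivariate stable tail dependence function `ℓ₂`
(continuous, homogeneous of order one, `max ≤ ℓ₂ ≤ sum`) and `p, q > 0`,
`∫₀¹∫₀¹ exp(−ℓ₂(−ln x, −ln y)) x^{p−1} y^{q−1} dx dy
  = ∫₀¹ [ℓ₂(1−s, s) + (1−s)(p−1) + s(q−1) + 1]^{−2} ds`. -/
theorem stmt13 (ℓ2 : ℝ → ℝ → ℝ)
    (hcont : ContinuousOn (fun q : ℝ × ℝ => ℓ2 q.1 q.2) {q | 0 ≤ q.1 ∧ 0 ≤ q.2})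
    (hhom : ∀ c : ℝ, 0 < c → ∀ x y : ℝ, 0 ≤ x → 0 ≤ y →
      ℓ2 (c * x) (c * y) = c * ℓ2 x y)
    (hbounds : ∀ x y : ℝ, 0 ≤ x → 0 ≤ y →
      max x y ≤ ℓ2 x y ∧ ℓ2 x y ≤ x + y)
    (p q : ℝ) (hp : 0 < p) (hq : 0 < q) :
    ∫ x in (0:ℝ)..1, ∫ y in (0:ℝ)..1,
        Real.exp (-ℓ2 (-Real.log x) (-Real.log y)) * x ^ (p - 1) * y ^ (q - 1)
      = ∫ s in (0:ℝ)..1,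
          ((ℓ2 (1 - s) s + (1 - s) * (p - 1) + s * (q - 1) + 1) ^ 2)⁻¹ := by
  have hnn : ∀ x y : ℝ, 0 ≤ x → 0 ≤ y → 0 ≤ ℓ2 x y := fun x y hx hy =>
    (le_max_of_le_left hx).trans (hbounds x y hx hy).1
  have hint := integrableOn_integrand ℓ2 hcont hnn p q hp hq
  set F : ℝ × ℝ → ℝ := fun z => Real.exp (-ℓ2 (-Real.log z.1) (-Real.log z.2))
      * z.1 ^ (p - 1) * z.2 ^ (q - 1) with hF
  have hmeas : MeasurableSet (Ioo (0:ℝ) 1 ×ˢ Ioi (0:ℝ)) := measurableSet_Ioo.prod measurableSet_Ioi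
  have hderiv : ∀ z ∈ Ioo (0:ℝ) 1 ×ˢ Ioi (0:ℝ),
      HasFDerivWithinAt tailCoord (tailCoordDeriv z) (Ioo (0:ℝ) 1 ×ˢ Ioi (0:ℝ)) z :=
    fun z _ => (hasFDerivAt_tailCoord z).hasFDerivWithinAt
  have hpull : ∀ z ∈ Ioo (0:ℝ) 1 ×ˢ Ioi (0:ℝ), |(tailCoordDeriv z).det| • F (tailCoord z) =
      z.2 * Real.exp (-((ℓ2 (1 - z.1) z.1 + (1 - z.1) * (p - 1) + z.1 * (q - 1) + 1) * z.2)) := by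
    rintro ⟨s, r⟩ ⟨⟨hs0, hs1⟩, hr⟩
    simp only [mem_Ioi] at hr hs0 hs1
    simp only [hF, det_tailCoordDeriv, tailCoord, Real.log_exp, neg_neg, abs_neg, smul_eq_mul]
    rw [abs_of_nonneg (by positivity), hhom r hr _ _ (by linarith) hs0.le, ← Real.exp_mul,
      ← Real.exp_mul, mul_assoc r, ← Real.exp_add, ← Real.exp_add, ← Real.exp_add, ← Real.exp_add]
    congr 2
    ring
  have hint' := (integrableOn_image_iff_integrableOn_abs_det_fderiv_smul (volume.prod volume)
    hmeas hderiv injOn_tailCoord F).1 (by rw [image_tailCoord]; exact hint)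
  have hint'' := hint'.congr_fun hpull hmeas
  have hchange := integral_image_eq_integral_abs_det_fderiv_smul (volume.prod volume)
    hmeas hderiv injOn_tailCoord F
  rw [image_tailCoord, setIntegral_congr_fun hmeas hpull, setIntegral_prod _ hint,
    setIntegral_prod _ hint''] at hchange
  simp only [intervalIntegral.integral_of_le zero_le_one, integral_Ioc_eq_integral_Ioo]
  refine hchange.trans (setIntegral_congr_fun measurableSet_Ioo fun s hs => ?_)
  dsimp only
  refine integral_mul_exp_neg_mul_Ioi ?_
  nlinarith [hnn (1 - s) s (by linarith [hs.2]) hs.1.le, mul_pos hs.1 hq,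
    mul_pos (sub_pos.2 hs.2) hp]
end
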